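/- Let k ≤ q and let C be the k-dimensional Reed-Solomon code of length q^2+1 over F_{q^2}. Then P(C) = {(h(a_1), …, h(a_{q^2}), h_{q-k}) : h ∈ U}, where h_{q-k} denotes the coefficient of X^{(q-k)(q+1)} in h, and the dimension of P(C) as an F_q-subspace is q^2 + 1 - k^2. -/

import Mathlib

open Polynomial

/-- The codeword of the (extended) `k`-dimensional Reed-Solomon code of length `q² + 1`
associated to a polynomial `f`: the evaluations of `f` at all elements of the field
(enumerated by `a`), followed by the coefficient of `X^(k-1)` in `f`. -/
def rsWord (q k : ℕ) {F : Type} [Field F] (a : Fin (q ^ 2) → F)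
    (f : Polynomial F) (i : Fin (q ^ 2 + 1)) : F :=
  if hi : (i : ℕ) < q ^ 2 then f.eval (a ⟨(i : ℕ), hi⟩) else f.coeff (k - 1)

/-- The puncture code `P(C)` of the `k`-dimensional Reed-Solomon code `C` of length `q² + 1`
over `F = 𝔽_{q²}`: all vectors `λ` with entries in the subfield `𝔽_q` (i.e. `λ_i^q = λ_i`)
such that `∑ λ_i u_i v_i^q = 0` for all codewords `u, v` of `C`. -/
def puncRS (q k : ℕ) {F : Type} [Field F] [Fintype F] (a : Fin (q ^ 2) → F) :
    Set (Fin (q ^ 2 + 1) → F) :=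
  {lam | (∀ i, lam i ^ q = lam i) ∧
    ∀ f g : Polynomial F, f.degree < (k : WithBot ℕ) → g.degree < (k : WithBot ℕ) →
      ∑ i, lam i * rsWord q k a f i * (rsWord q k a g i) ^ q = 0}

/-- The Hamming weight of a vector: the number of its nonzero coordinates. -/
noncomputable def wt {n : ℕ} {F : Type} [Zero F] (v : Fin n → F) : ℕ :=
  Set.ncard {i | v i ≠ 0}

/-- Membership in the `𝔽_q`-subspace `U` of polynomials
`h(X) = ∑_{i=0}^{q-k-1} ∑_{j=i+1}^{q-1} (h_{ij} X^{iq+j} + h_{ij}^q X^{jq+i})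
        + ∑_{i=0}^{q-k} h_i X^{i(q+1)}`
with `h_{ij} ∈ 𝔽_{q²}` and `h_i ∈ 𝔽_q`. -/
def memU (q k : ℕ) {F : Type} [Field F] (h : Polynomial F) : Prop :=
  ∃ (h2 : ℕ → ℕ → F) (h1 : ℕ → F),
    (∀ i, h1 i ^ q = h1 i) ∧
    h = (∑ i ∈ Finset.range (q - k), ∑ j ∈ Finset.Ico (i + 1) q,
          (C (h2 i j) * X ^ (i * q + j) + C (h2 i j ^ q) * X ^ (j * q + i)))
      + ∑ i ∈ Finset.range (q - k + 1), C (h1 i) * X ^ (i * (q + 1))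

/-!
Index the coefficients of a polynomial `h` of degree less than `q²` by the pairs `(i, j)` of
base-`q` digits of the exponent `i q + j`. As `x ↦ x ^ q` sends `x ^ (i q + j)` to `x ^ (j q + i)`
on `𝔽_{q²}`, the values of `h` lie in `𝔽_q` if and only if the resulting `q × q` matrix is
Hermitian.

Let `k` be positive and interpolate the first `q²` entries of a vector `v` by such an `h`. Since
`∑ x, x ^ m` vanishes on `𝔽_{q²}` unless `m` is a positive multiple of `q² - 1`, the sum
`∑ x, h(x) x ^ (s + t q)` is the negative of the coefficient of `h` with digits
`(q - 1 - t, q - 1 - s)` (for `s = t = q - 1`, the coefficient of `X ^ (q² - 1)` is added to it).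
The orthogonality conditions for `s, t < k` therefore say that the lower right `k × k` block of the
matrix vanishes, except for its upper left entry, which has to be the last entry of `v`. The
Hermitian matrices of this shape are exactly those of the elements of `U`.

For `k = 0` the space `U` contains in addition the `𝔽_q`-multiples of `X ^ (q (q + 1))`, and these
account for the last entry, which is then arbitrary in `𝔽_q`.
-/

section Digits

variable {R : Type*} {q : ℕ}

theorem mul_add_eq_mul_add_iff {i j a b : ℕ} (hj : j < q) (hb : b < q) :
    i * q + j = a * q + b ↔ i = a ∧ j = b := by
  refine ⟨fun h => ?_, by rintro ⟨rfl, rfl⟩; rfl⟩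
  have hia : i = a := by
    simpa [Nat.add_comm _ j, Nat.add_comm _ b, Nat.add_mul_div_right, Nat.div_eq_of_lt, hj, hb,
      hj.pos] using congrArg (· / q) h
  subst hia
  exact ⟨rfl, Nat.add_left_cancel h⟩

theorem mul_add_lt_sq {i j : ℕ} (hi : i < q) (hj : j < q) : i * q + j < q ^ 2 := by
  nlinarith

variable [Semiring R]

theorem eq_of_coeff_mul_add_eq {f g : R[X]} (hf : f.degree < (q ^ 2 : ℕ))
    (hg : g.degree < (q ^ 2 : ℕ))
    (h : ∀ i < q, ∀ j < q, f.coeff (i * q + j) = g.coeff (i * q + j)) : f = g := by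
  ext n
  rcases lt_or_ge n (q ^ 2) with hn | hn
  · rw [sq] at hn
    have hq : 0 < q := Nat.pos_of_mul_pos_left (n.zero_le.trans_lt hn)
    simpa only [Nat.div_add_mod'] using
      h (n / q) (Nat.div_lt_of_lt_mul hn) (n % q) (Nat.mod_lt n hq)
  · rw [coeff_eq_zero_of_degree_lt (hf.trans_le (by exact_mod_cast hn)),
      coeff_eq_zero_of_degree_lt (hg.trans_le (by exact_mod_cast hn))]

theorem degree_C_mul_X_pow_mul_add_lt (c : R) {a b : ℕ} (ha : a < q) (hb : b < q) :
    degree (C c * X ^ (a * q + b)) < (q ^ 2 : ℕ) :=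
  (degree_C_mul_X_pow_le _ c).trans_lt (Nat.cast_lt.mpr (mul_add_lt_sq ha hb))

theorem coeff_C_mul_X_pow_mul_add (c : R) (a i : ℕ) {b j : ℕ} (hb : b < q) (hj : j < q) :
    (C c * X ^ (a * q + b)).coeff (i * q + j) = if i = a ∧ j = b then c else 0 := by
  simp only [coeff_C_mul_X_pow, mul_add_eq_mul_add_iff hj hb]

theorem coeff_add_C_mul_X_pow_of_degree_lt {g : R[X]} {n : ℕ}
    (hg : g.degree < n) (c : R) : (g + C c * X ^ n).coeff n = c := by
  rw [coeff_add, coeff_C_mul_X_pow, if_pos rfl, coeff_eq_zero_of_degree_lt hg, zero_add]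

/-- The polynomial of degree less than `q²` whose coefficients, indexed by the pairs of base-`q`
digits of the exponent, form the `q × q` matrix `c`. -/
noncomputable def polyOfDigits (q : ℕ) (c : ℕ → ℕ → R) : R[X] :=
  ∑ i ∈ Finset.range q, ∑ j ∈ Finset.range q, C (c i j) * X ^ (i * q + j)

theorem degree_polyOfDigits_lt (q : ℕ) (c : ℕ → ℕ → R) :
    (polyOfDigits q c).degree < (q ^ 2 : ℕ) := by
  simp only [polyOfDigits, ← mem_degreeLT]
  refine Submodule.sum_mem _ fun i hi => Submodule.sum_mem _ fun j hj => mem_degreeLT.mpr ?_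
  exact degree_C_mul_X_pow_mul_add_lt _ (Finset.mem_range.mp hi) (Finset.mem_range.mp hj)

theorem coeff_polyOfDigits (c : ℕ → ℕ → R) {i j : ℕ} (hi : i < q) (hj : j < q) :
    (polyOfDigits q c).coeff (i * q + j) = c i j := by
  calc (polyOfDigits q c).coeff (i * q + j)
      = ∑ a ∈ Finset.range q, ∑ b ∈ Finset.range q, if i = a ∧ j = b then c a b else 0 := by
        simp only [polyOfDigits, finsetSum_coeff]
        exact Finset.sum_congr rfl fun a _ => Finset.sum_congr rfl fun b hb =>
          coeff_C_mul_X_pow_mul_add _ _ _ (Finset.mem_range.mp hb) hj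
    _ = c i j := by simp [ite_and, hi, hj]

theorem polyOfDigits_coeff {h : R[X]} (hdeg : h.degree < (q ^ 2 : ℕ)) :
    polyOfDigits q (fun i j => h.coeff (i * q + j)) = h :=
  eq_of_coeff_mul_add_eq (degree_polyOfDigits_lt q _) hdeg fun _ hi _ hj =>
    coeff_polyOfDigits _ hi hj

end Digits

section Hermitian

variable {R : Type*} [Semiring R] {q : ℕ} {φ : R → R}

/-- The polynomial `h` has degree less than `q²`, and its matrix of coefficients, indexed by the
pairs of base-`q` digits of the exponent, is Hermitian with respect to the conjugation `φ`. Over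
`𝔽_{q²}`, with `φ x = x ^ q`, these are the reduced polynomials all of whose values lie in `𝔽_q`. -/
def IsHermitianPoly (q : ℕ) (φ : R → R) (h : R[X]) : Prop :=
  h.degree < (q ^ 2 : ℕ) ∧ ∀ i < q, ∀ j < q, h.coeff (j * q + i) = φ (h.coeff (i * q + j))

theorem IsHermitianPoly.ext {f g : R[X]} (hf : IsHermitianPoly q φ f) (hg : IsHermitianPoly q φ g)
    (h : ∀ i j, i ≤ j → j < q → f.coeff (i * q + j) = g.coeff (i * q + j)) : f = g := by
  refine eq_of_coeff_mul_add_eq hf.1 hg.1 fun i hi j hj => ?_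
  rcases le_total i j with hij | hji
  · exact h i j hij hj
  · rw [hf.2 j hj i hi, hg.2 j hj i hi, h j i hji hi]

end Hermitian

section FiniteField

variable {F : Type*} [Field F] [Fintype F] {q : ℕ} {φ : F →+* F}

theorem one_lt_of_card_eq_sq (hF : Fintype.card F = q ^ 2) : 1 < q :=
  (one_lt_sq_iff₀ q.zero_le).mp (hF ▸ Fintype.one_lt_card)

theorem exists_ringHom_eq_pow (hF : Fintype.card F = q ^ 2) (hq : IsPrimePow q) :
    ∃ φ : F →+* F, ∀ x, φ x = x ^ q := by
  obtain ⟨p, n, hp, -, rfl⟩ := hq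
  have : Fact p.Prime := ⟨hp.nat_prime⟩
  have : CharP F p := charP_of_card_eq_prime_pow (hF.trans (pow_mul p n 2).symm)
  exact ⟨iterateFrobenius F p n, iterateFrobenius_def p n⟩

theorem card_pow_eq_self {n : ℕ} (hn : n ≠ 0) (hq : 1 < q) (hF : Fintype.card F = q ^ n) :
    Nat.card {x : F // x ^ q = x} = q := by
  classical
  have hne : (X ^ q ^ n - X : F[X]) ≠ 0 := FiniteField.X_pow_card_pow_sub_X_ne_zero F hn hq
  have hroots : (X ^ q ^ n - X : F[X]).roots = Finset.univ.val := by
    rw [← hF, FiniteField.roots_X_pow_card_sub_X]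
  have hsplits : (X ^ q ^ n - X : F[X]).Splits := by
    rw [splits_iff_card_roots, hroots, FiniteField.X_pow_card_pow_sub_X_natDegree_eq F hn hq, ← hF]
    rfl
  have hdvd : (X ^ q - X : F[X]) ∣ X ^ q ^ n - X := by
    simpa only [pow_one] using dvd_pow_pow_sub_self_of_dvd (r := (X : F[X])) (p := q) (one_dvd n)
  have hnodup : (X ^ q - X : F[X]).roots.Nodup :=
    Multiset.nodup_of_le (roots.le_of_dvd hne hdvd) (hroots ▸ Finset.univ.nodup)
  have hq0 : (X ^ q - X : F[X]) ≠ 0 := FiniteField.X_pow_card_sub_X_ne_zero F hq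
  rw [Nat.subtype_card (X ^ q - X : F[X]).roots.toFinset fun x => by
      rw [Multiset.mem_toFinset, mem_roots hq0, IsRoot, eval_sub, eval_X_pow, eval_X, sub_eq_zero],
    Multiset.toFinset_card_of_nodup hnodup, ← (hsplits.of_dvd hne hdvd).natDegree_eq_card_roots,
    FiniteField.X_pow_card_sub_X_natDegree_eq F hq]

theorem sum_pow_eq_ite (m : ℕ) :
    ∑ x : F, x ^ m = if m ≠ 0 ∧ Fintype.card F - 1 ∣ m then -1 else 0 := by
  classical
  rcases eq_or_ne m 0 with rfl | hm
  · simp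
  · simp only [ne_eq, hm, not_false_eq_true, true_and, ← FiniteField.sum_pow_units,
      Fintype.sum_eq_add_sum_subtype_ne _ (0 : F), zero_pow, zero_add]
    exact (Equiv.sum_comp unitsEquivNeZero fun x : {x : F // x ≠ 0} => (x : F) ^ m).symm

theorem ne_zero_and_dvd_iff_of_le_two_mul {r m : ℕ} (hr : 0 < r) (hm : m ≤ 2 * r) :
    m ≠ 0 ∧ r ∣ m ↔ m = r ∨ m = 2 * r := by
  constructor
  · rintro ⟨hm0, c, rfl⟩
    have hc : c ≤ 2 := Nat.le_of_mul_le_mul_left (by linarith) hr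
    interval_cases c <;> omega
  · rintro (rfl | rfl)
    · exact ⟨hr.ne', dvd_rfl⟩
    · exact ⟨by omega, dvd_mul_left r 2⟩

theorem sum_eval_eq_neg_coeff_sub_coeff {p : F[X]} (hp : p.natDegree ≤ 2 * (Fintype.card F - 1)) :
    ∑ x : F, p.eval x =
      -p.coeff (Fintype.card F - 1) - p.coeff (2 * (Fintype.card F - 1)) := by
  have hr : 0 < Fintype.card F - 1 := Nat.sub_pos_of_lt Fintype.one_lt_card
  set r := Fintype.card F - 1 with hrF
  have hterm (m : ℕ) (hm : m ∈ Finset.range (2 * r + 1)) : p.coeff m * ∑ x : F, x ^ m =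
      -(if m = r then p.coeff m else 0) - if m = 2 * r then p.coeff m else 0 := by
    rw [sum_pow_eq_ite, ← hrF, if_congr (ne_zero_and_dvd_iff_of_le_two_mul hr
      (Finset.mem_range_succ_iff.mp hm)) rfl rfl]
    split_ifs <;> first | omega | simp
  calc ∑ x : F, p.eval x = ∑ m ∈ Finset.range (2 * r + 1), p.coeff m * ∑ x : F, x ^ m := by
        simp only [eval_eq_sum_range' (Nat.lt_succ_of_le hp), Finset.mul_sum]
        exact Finset.sum_comm
    _ = -p.coeff r - p.coeff (2 * r) := by
        rw [Finset.sum_congr rfl hterm, Finset.sum_sub_distrib, Finset.sum_neg_distrib,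
          Finset.sum_ite_eq', Finset.sum_ite_eq', if_pos (by simp; omega), if_pos (by simp)]

theorem sum_eval_mul_pow {p : F[X]} (hp : p.degree < Fintype.card F) {m : ℕ}
    (hm : m < Fintype.card F) :
    ∑ x : F, p.eval x * x ^ m =
      -p.coeff (Fintype.card F - 1 - m) - p.coeff (2 * (Fintype.card F - 1) - m) := by
  have hp' : p.natDegree ≤ Fintype.card F - 1 :=
    natDegree_le_iff_coeff_eq_zero.mpr fun n hn =>
      coeff_eq_zero_of_degree_lt (hp.trans_le (Nat.cast_le.mpr (by omega)))
  have hdeg : (p * X ^ m).natDegree ≤ 2 * (Fintype.card F - 1) :=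
    natDegree_mul_le.trans (by rw [natDegree_X_pow]; omega)
  simpa [coeff_mul_X_pow', show m ≤ Fintype.card F - 1 by omega,
    show m ≤ 2 * (Fintype.card F - 1) by omega] using sum_eval_eq_neg_coeff_sub_coeff hdeg

theorem pow_pow_of_card_eq_sq (hF : Fintype.card F = q ^ 2) (x : F) : (x ^ q) ^ q = x := by
  rw [← pow_mul, ← sq, ← hF, FiniteField.pow_card]

theorem pow_mul_add_one_pow (hF : Fintype.card F = q ^ 2) (x : F) :
    (x ^ (q * (q + 1))) ^ q = x ^ (q * (q + 1)) :=
  calc (x ^ (q * (q + 1))) ^ q = ((x ^ q) ^ q) ^ q * (x ^ q) ^ q := by ring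
    _ = (x ^ q) ^ q * x ^ q := by rw [pow_pow_of_card_eq_sq hF, mul_comm]
    _ = x ^ (q * (q + 1)) := by ring

theorem involutive_of_eq_pow (hF : Fintype.card F = q ^ 2) (hφ : ∀ x, φ x = x ^ q) :
    Function.Involutive φ := fun x => by
  rw [hφ, hφ, pow_pow_of_card_eq_sq hF]

theorem eval_polyOfDigits_pow (hF : Fintype.card F = q ^ 2) (hφ : ∀ x, φ x = x ^ q)
    (c : ℕ → ℕ → F) (x : F) :
    (polyOfDigits q c).eval x ^ q = (polyOfDigits q fun i j => φ (c j i)).eval x := by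
  have hpow (i j : ℕ) : (x ^ (i * q + j)) ^ q = x ^ (j * q + i) :=
    calc (x ^ (i * q + j)) ^ q = ((x ^ q) ^ q) ^ i * x ^ (j * q) := by ring
      _ = x ^ (j * q + i) := by rw [pow_pow_of_card_eq_sq hF, ← pow_add, add_comm]
  simp only [← hφ, polyOfDigits, eval_finsetSum, eval_mul, eval_C, eval_X_pow, map_sum, map_mul]
  rw [Finset.sum_comm]
  simp only [hφ, hpow]

theorem eq_of_eval_eq_of_degree_lt_card {f g : F[X]} (hf : f.degree < Fintype.card F)
    (hg : g.degree < Fintype.card F) (h : ∀ x, f.eval x = g.eval x) : f = g :=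
  eq_of_degrees_lt_of_eval_finset_eq Finset.univ hf hg fun x _ => h x

theorem isHermitianPoly_iff_eval_pow (hF : Fintype.card F = q ^ 2)
    (hφ : ∀ x, φ x = x ^ q) {h : F[X]} (hdeg : h.degree < (q ^ 2 : ℕ)) :
    IsHermitianPoly q φ h ↔ ∀ x, h.eval x ^ q = h.eval x := by
  have hpow (x : F) := eval_polyOfDigits_pow hF hφ (fun i j => h.coeff (i * q + j)) x
  rw [polyOfDigits_coeff hdeg] at hpow
  simp only [hpow]
  constructor
  · rintro ⟨-, hh⟩ x
    congr 1
    refine eq_of_coeff_mul_add_eq (degree_polyOfDigits_lt q _) hdeg fun i hi j hj => ?_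
    rw [coeff_polyOfDigits _ hi hj, hh j hj i hi]
  · intro hval
    have heq : polyOfDigits q (fun i j => φ (h.coeff (j * q + i))) = h :=
      eq_of_eval_eq_of_degree_lt_card (hF ▸ degree_polyOfDigits_lt q _) (hF ▸ hdeg) hval
    refine ⟨hdeg, fun i hi j hj => ?_⟩
    conv_lhs => rw [← heq, coeff_polyOfDigits _ hj hi]

end FiniteField

section ReedSolomon

variable {F : Type} [Field F] {q k : ℕ} {a : Fin (q ^ 2) → F}

@[simp]
theorem rsWord_castSucc (f : F[X]) (i : Fin (q ^ 2)) :
    rsWord q k a f i.castSucc = f.eval (a i) := by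
  simp [rsWord]

@[simp]
theorem rsWord_last (f : F[X]) : rsWord q k a f (Fin.last _) = f.coeff (k - 1) := by
  simp [rsWord]

theorem rsWord_eq_sum {n : ℕ} {f : F[X]} (hf : f.degree < n) (i : Fin (q ^ 2 + 1)) :
    rsWord q k a f i = ∑ s ∈ Finset.range n, f.coeff s * rsWord q k a (X ^ s) i := by
  have hsum : f = ∑ s ∈ Finset.range n, C (f.coeff s) * X ^ s := by
    ext m
    simp only [finsetSum_coeff, coeff_C_mul_X_pow, Finset.sum_ite_eq, Finset.mem_range]
    split_ifs with hm
    · rfl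
    · exact coeff_eq_zero_of_degree_lt (hf.trans_le (Nat.cast_le.mpr (not_lt.mp hm)))
  conv_lhs => rw [hsum]
  unfold rsWord
  split_ifs <;> simp only [eval_finsetSum, finsetSum_coeff, eval_mul, eval_C, coeff_C_mul]

theorem rsWord_injOn [Fintype F] (hF : Fintype.card F = q ^ 2) (ha : Function.Surjective a) :
    Set.InjOn (rsWord q k a) {f | f.degree < (q ^ 2 : ℕ)} := by
  intro f hf g hg hfg
  refine eq_of_eval_eq_of_degree_lt_card (hF ▸ hf) (hF ▸ hg) (ha.forall.mpr fun i => ?_)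
  simpa only [rsWord_castSucc] using congrFun hfg i.castSucc

theorem exists_degree_lt_forall_eval_eq {n : ℕ} {b : Fin n → F} (hb : Function.Injective b)
    (w : Fin n → F) : ∃ h : F[X], h.degree < n ∧ ∀ i, h.eval (b i) = w i :=
  ⟨Lagrange.interpolate Finset.univ b w,
    (Lagrange.degree_interpolate_lt w hb.injOn).trans_eq (by simp),
    fun i => Lagrange.eval_interpolate_at_node w hb.injOn (Finset.mem_univ i)⟩

/-- The lower right `k × k` block of the matrix of coefficients of `h`, indexed by the pairs of
base-`q` digits of the exponent, is zero except for its upper left entry `l`. -/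
def HasCornerBlock (q k : ℕ) (l : F) (h : F[X]) : Prop :=
  ∀ i j, q - k ≤ i → i < q → q - k ≤ j → j < q →
    h.coeff (i * q + j) = if i = q - k ∧ j = q - k then l else 0

theorem hasCornerBlock_iff_coeff_add_coeff (hq : 1 < q) {h : F[X]}
    (hdeg : h.degree < (q ^ 2 : ℕ)) (l : F) :
    HasCornerBlock q k l h ↔ ∀ i j, q - k ≤ i → i < q → q - k ≤ j → j < q →
      h.coeff (i * q + j) + h.coeff (q ^ 2 - 1 + (i * q + j)) =
        if i = q - k ∧ j = q - k then l else 0 := by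
  have hvanish (n : ℕ) (hn : q ^ 2 ≤ n) : h.coeff n = 0 :=
    coeff_eq_zero_of_degree_lt (hdeg.trans_le (Nat.cast_le.mpr hn))
  have hlast : (q - 1) * q + (q - 1) = q ^ 2 - 1 := by
    obtain ⟨r, rfl⟩ := Nat.exists_eq_add_of_lt hq
    have : (1 + r + 1) ^ 2 = (1 + r) * (1 + r + 1) + (1 + r) + 1 := by ring
    rw [this, Nat.add_sub_cancel, Nat.add_sub_cancel]
  have hsq : 1 < q ^ 2 := Nat.one_lt_pow two_ne_zero hq
  -- The second coefficient can only be nonzero at `i = j = 0`, where `q ≤ k` and it is the entry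
  -- `(q - 1, q - 1)`, which either side forces to vanish.
  constructor <;> intro hcorner i j hki hi hkj hj
  · rw [← hcorner i j hki hi hkj hj, add_eq_left]
    rcases Nat.eq_zero_or_pos (i * q + j) with h0 | hpos
    · have hi0 : i = 0 := by nlinarith
      rw [h0, add_zero, ← hlast, hcorner _ _ (by omega) (by omega) (by omega) (by omega),
        if_neg (by omega)]
    · exact hvanish _ (by omega)
  · rw [← hcorner i j hki hi hkj hj, left_eq_add]
    rcases Nat.eq_zero_or_pos (i * q + j) with h0 | hpos
    · have hi0 : i = 0 := by nlinarith
      have hentry := hcorner (q - 1) (q - 1) (by omega) (by omega) (by omega) (by omega)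
      rwa [hlast, hvanish (q ^ 2 - 1 + (q ^ 2 - 1)) (by omega), if_neg (by omega), add_zero,
        ← add_zero (q ^ 2 - 1), ← h0] at hentry
    · exact hvanish _ (by omega)

variable [Fintype F] {φ : F →+* F}

theorem mem_puncRS_iff_monomials (hφ : ∀ x, φ x = x ^ q) {v : Fin (q ^ 2 + 1) → F} :
    v ∈ puncRS q k a ↔ (∀ i, v i ^ q = v i) ∧ ∀ s < k, ∀ t < k,
      ∑ i, v i * rsWord q k a (X ^ s) i * rsWord q k a (X ^ t) i ^ q = 0 := by
  refine and_congr_right fun _ => ⟨fun h s hs t ht => ?_, fun h f g hf hg => ?_⟩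
  · exact h _ _ (by simpa using hs) (by simpa using ht)
  calc ∑ i, v i * rsWord q k a f i * rsWord q k a g i ^ q
      = ∑ i, ∑ s ∈ Finset.range k, ∑ t ∈ Finset.range k, f.coeff s * φ (g.coeff t) *
          (v i * rsWord q k a (X ^ s) i * rsWord q k a (X ^ t) i ^ q) := by
        refine Finset.sum_congr rfl fun i _ => ?_
        rw [← hφ, rsWord_eq_sum hf, rsWord_eq_sum hg, map_sum, mul_assoc, Finset.sum_mul_sum,
          Finset.mul_sum]
        refine Finset.sum_congr rfl fun s _ => ?_
        rw [Finset.mul_sum]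
        refine Finset.sum_congr rfl fun t _ => ?_
        rw [map_mul, hφ (rsWord _ _ _ _ _)]
        ring
    _ = ∑ s ∈ Finset.range k, ∑ t ∈ Finset.range k, f.coeff s * φ (g.coeff t) *
          ∑ i, v i * rsWord q k a (X ^ s) i * rsWord q k a (X ^ t) i ^ q := by
        simp only [Finset.mul_sum]
        rw [Finset.sum_comm]
        exact Finset.sum_congr rfl fun s _ => Finset.sum_comm
    _ = 0 := Finset.sum_eq_zero fun s hs => Finset.sum_eq_zero fun t ht => by
        rw [h s (Finset.mem_range.mp hs) t (Finset.mem_range.mp ht), mul_zero]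

theorem sum_mul_rsWord_X_pow (hF : Fintype.card F = q ^ 2) (ha : Function.Bijective a) {h : F[X]}
    (hdeg : h.degree < (q ^ 2 : ℕ)) {v : Fin (q ^ 2 + 1) → F}
    (hv : ∀ i : Fin (q ^ 2), v i.castSucc = h.eval (a i)) {i j : ℕ} (hi : i < q) (hj : j < q) :
    ∑ n, v n * rsWord q k a (X ^ (q - 1 - j)) n * rsWord q k a (X ^ (q - 1 - i)) n ^ q =
      -h.coeff (i * q + j) - h.coeff (q ^ 2 - 1 + (i * q + j)) +
        if q - 1 - j = k - 1 ∧ q - 1 - i = k - 1 then v (Fin.last _) else 0 := by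
  have hlt : i * q + j < q ^ 2 := mul_add_lt_sq hi hj
  have hexp : q - 1 - j + (q - 1 - i) * q = q ^ 2 - 1 - (i * q + j) := by
    obtain ⟨r, rfl⟩ := Nat.exists_eq_add_of_lt hi
    obtain ⟨s, hs⟩ := Nat.exists_eq_add_of_lt hj
    have : (i + r + 1) ^ 2 = i * (i + r + 1) + r * (i + r + 1) + (i + r + 1) := by ring
    rw [show i + r + 1 - 1 - i = r by omega]
    omega
  rw [Fin.sum_univ_castSucc]
  congr 1
  · calc ∑ n : Fin (q ^ 2), v n.castSucc * rsWord q k a (X ^ (q - 1 - j)) n.castSucc *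
          rsWord q k a (X ^ (q - 1 - i)) n.castSucc ^ q
        = ∑ x, h.eval x * x ^ (q ^ 2 - 1 - (i * q + j)) := by
          simp only [rsWord_castSucc, hv, eval_X_pow, ← hexp, pow_add, pow_mul, mul_assoc]
          exact ha.sum_comp fun x => h.eval x * (x ^ (q - 1 - j) * (x ^ (q - 1 - i)) ^ q)
      _ = -h.coeff (i * q + j) - h.coeff (q ^ 2 - 1 + (i * q + j)) := by
          rw [sum_eval_mul_pow (hF ▸ hdeg) (by omega), hF]
          congr 3 <;> omega
  · have hq : q ≠ 0 := hi.ne_bot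
    simp only [rsWord_last, coeff_X_pow, ite_pow, one_pow, zero_pow hq, eq_comm (a := k - 1),
      ite_and, mul_ite, mul_one, mul_zero]
    split_ifs <;> rfl

theorem forall_sum_eq_zero_iff_hasCornerBlock (hk : k ≤ q)
    (hF : Fintype.card F = q ^ 2) (ha : Function.Bijective a) {h : F[X]}
    (hdeg : h.degree < (q ^ 2 : ℕ)) {v : Fin (q ^ 2 + 1) → F}
    (hv : ∀ i : Fin (q ^ 2), v i.castSucc = h.eval (a i)) :
    (∀ s < k, ∀ t < k, ∑ i, v i * rsWord q k a (X ^ s) i * rsWord q k a (X ^ t) i ^ q = 0) ↔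
      HasCornerBlock q k (v (Fin.last _)) h := by
  rw [hasCornerBlock_iff_coeff_add_coeff (one_lt_of_card_eq_sq hF) hdeg]
  have hentry {i j : ℕ} (hki : q - k ≤ i) (hi : i < q) (hkj : q - k ≤ j) (hj : j < q) :
      ∑ n, v n * rsWord q k a (X ^ (q - 1 - j)) n * rsWord q k a (X ^ (q - 1 - i)) n ^ q = 0 ↔
        h.coeff (i * q + j) + h.coeff (q ^ 2 - 1 + (i * q + j)) =
          if i = q - k ∧ j = q - k then v (Fin.last _) else 0 := by
    have hcorner : q - 1 - j = k - 1 ∧ q - 1 - i = k - 1 ↔ i = q - k ∧ j = q - k := by omega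
    rw [sum_mul_rsWord_X_pow hF ha hdeg hv hi hj, if_congr hcorner rfl rfl, ← neg_add',
      neg_add_eq_zero]
  constructor
  · intro hsum i j hki hi hkj hj
    exact (hentry hki hi hkj hj).mp (hsum _ (by omega) _ (by omega))
  · intro hcoeff s hs t ht
    have hst := (hentry (i := q - 1 - t) (j := q - 1 - s) (by omega) (by omega) (by omega)
      (by omega)).mpr (hcoeff _ _ (by omega) (by omega) (by omega) (by omega))
    rwa [show q - 1 - (q - 1 - s) = s by omega, show q - 1 - (q - 1 - t) = t by omega] at hst

theorem mem_puncRS_iff_hasCornerBlock (hk : k ≤ q) (hF : Fintype.card F = q ^ 2)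
    (hφ : ∀ x, φ x = x ^ q) (ha : Function.Bijective a) {h : F[X]}
    (hdeg : h.degree < (q ^ 2 : ℕ)) {v : Fin (q ^ 2 + 1) → F}
    (hv : ∀ i : Fin (q ^ 2), v i.castSucc = h.eval (a i)) :
    v ∈ puncRS q k a ↔ (IsHermitianPoly q φ h ∧ v (Fin.last _) ^ q = v (Fin.last _)) ∧
      HasCornerBlock q k (v (Fin.last _)) h := by
  rw [mem_puncRS_iff_monomials hφ, forall_sum_eq_zero_iff_hasCornerBlock hk hF ha hdeg hv,
    isHermitianPoly_iff_eval_pow hF hφ hdeg, Fin.forall_fin_succ', ha.2.forall]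
  simp only [hv]

end ReedSolomon

section SpaceU

variable {F : Type} [Field F] {q k : ℕ} {φ : F →+* F}

/-- The element of the space `U` with the parameters `h_{ij} = c i j` and `h_i = d i`. -/
noncomputable def uPoly (q k : ℕ) (c : ℕ → ℕ → F) (d : ℕ → F) : F[X] :=
  (∑ i ∈ Finset.range (q - k), ∑ j ∈ Finset.Ico (i + 1) q,
      (C (c i j) * X ^ (i * q + j) + C (c i j ^ q) * X ^ (j * q + i)))
    + ∑ i ∈ Finset.range (q - k + 1), C (d i) * X ^ (i * (q + 1))

theorem memU_iff_exists_uPoly {h : F[X]} :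
    memU q k h ↔ ∃ (c : ℕ → ℕ → F) (d : ℕ → F), (∀ i, d i ^ q = d i) ∧ h = uPoly q k c d :=
  Iff.rfl

theorem degree_uPoly_lt (hk0 : 0 < k) (hk : k ≤ q) (c : ℕ → ℕ → F) (d : ℕ → F) :
    (uPoly q k c d).degree < (q ^ 2 : ℕ) := by
  rw [uPoly, ← mem_degreeLT]
  refine add_mem (sum_mem fun i hi => sum_mem fun j hj => ?_) (sum_mem fun i hi => ?_)
  · rw [Finset.mem_range] at hi
    rw [Finset.mem_Ico] at hj
    exact add_mem (mem_degreeLT.mpr (degree_C_mul_X_pow_mul_add_lt _ (by omega) (by omega)))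
      (mem_degreeLT.mpr (degree_C_mul_X_pow_mul_add_lt _ (by omega) (by omega)))
  · rw [Finset.mem_range] at hi
    rw [mul_add_one, mem_degreeLT]
    exact degree_C_mul_X_pow_mul_add_lt _ (by omega) (by omega)

theorem coeff_uPoly (hk0 : 0 < k) (c : ℕ → ℕ → F) (d : ℕ → F) {i j : ℕ}
    (hi : i < q) (hj : j < q) :
    (uPoly q k c d).coeff (i * q + j) =
      (if i < q - k ∧ i < j then c i j else 0) + (if j < q - k ∧ j < i then c j i ^ q else 0) +
        if i = j ∧ i ≤ q - k then d i else 0 := by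
  have hoff : (∑ a ∈ Finset.range (q - k), ∑ b ∈ Finset.Ico (a + 1) q,
      (C (c a b) * X ^ (a * q + b) + C (c a b ^ q) * X ^ (b * q + a))).coeff (i * q + j) =
      ∑ a ∈ Finset.range (q - k), ∑ b ∈ Finset.Ico (a + 1) q,
        ((if i = a ∧ j = b then c a b else 0) + if j = a ∧ i = b then c a b ^ q else 0) := by
    simp only [finsetSum_coeff, coeff_add]
    refine Finset.sum_congr rfl fun a ha => Finset.sum_congr rfl fun b hb => ?_
    rw [Finset.mem_range] at ha
    rw [Finset.mem_Ico] at hb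
    rw [coeff_C_mul_X_pow_mul_add _ _ _ hb.2 hj, coeff_C_mul_X_pow_mul_add _ _ _ (by omega) hj,
      if_congr (and_comm (a := i = b)) rfl rfl]
  have hdiag : (∑ a ∈ Finset.range (q - k + 1), C (d a) * X ^ (a * (q + 1))).coeff (i * q + j) =
      ∑ a ∈ Finset.range (q - k + 1), if i = a ∧ j = a then d a else 0 := by
    rw [finsetSum_coeff]
    refine Finset.sum_congr rfl fun a ha => ?_
    rw [Finset.mem_range] at ha
    rw [mul_add_one, coeff_C_mul_X_pow_mul_add _ _ _ (by omega) hj]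
  rw [uPoly, coeff_add, hoff, hdiag]
  simp only [Finset.sum_add_distrib, ite_and, Finset.sum_ite_irrel, Finset.sum_const_zero,
    Finset.sum_ite_eq, Finset.mem_range, Finset.mem_Ico]
  congr 1
  · congr 1 <;> split_ifs <;> first | rfl | omega
  · split_ifs <;> first | rfl | omega

theorem coeff_uPoly_of_lt (hk0 : 0 < k) (c : ℕ → ℕ → F) (d : ℕ → F) {i j : ℕ}
    (hi : i < q - k) (hij : i < j) (hj : j < q) :
    (uPoly q k c d).coeff (i * q + j) = c i j := by
  rw [coeff_uPoly hk0 c d (by omega) hj, if_pos ⟨hi, hij⟩, if_neg (by omega),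
    if_neg (by omega), add_zero, add_zero]

theorem coeff_uPoly_self (hk0 : 0 < k) (hk : k ≤ q) (c : ℕ → ℕ → F) (d : ℕ → F) {i : ℕ}
    (hi : i ≤ q - k) : (uPoly q k c d).coeff (i * q + i) = d i := by
  rw [coeff_uPoly hk0 c d (by omega) (by omega), if_neg (by omega), if_neg (by omega),
    if_pos ⟨rfl, hi⟩, zero_add, zero_add]

theorem isHermitianPoly_uPoly (hk0 : 0 < k) (hk : k ≤ q) (hφ : ∀ x, φ x = x ^ q)
    (hφφ : Function.Involutive φ) (c : ℕ → ℕ → F) {d : ℕ → F} (hd : ∀ i, d i ^ q = d i) :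
    IsHermitianPoly q φ (uPoly q k c d) := by
  refine ⟨degree_uPoly_lt hk0 hk c d, fun i hi j hj => ?_⟩
  rw [coeff_uPoly hk0 c d hj hi, coeff_uPoly hk0 c d hi hj]
  simp only [map_add, apply_ite φ, map_zero, ← hφ, hφφ (c j i)]
  rw [add_comm (ite _ (c j i) _)]
  congr 1
  rcases eq_or_ne i j with rfl | hij
  · rw [hφ, hd]
  · rw [if_neg (by omega), if_neg (by omega)]

theorem hasCornerBlock_uPoly (hk0 : 0 < k) (c : ℕ → ℕ → F) (d : ℕ → F) :
    HasCornerBlock q k (d (q - k)) (uPoly q k c d) := by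
  intro i j hki hi hkj hj
  rw [coeff_uPoly hk0 c d hi hj, if_neg (by omega), if_neg (by omega), zero_add, zero_add]
  by_cases hcorner : i = q - k ∧ j = q - k
  · obtain ⟨rfl, rfl⟩ := hcorner
    simp
  · rw [if_neg (by omega), if_neg hcorner]

theorem eq_of_hasCornerBlock {f g : F[X]} {l m : F} (hf : IsHermitianPoly q φ f)
    (hg : IsHermitianPoly q φ g) (hfc : HasCornerBlock q k l f) (hgc : HasCornerBlock q k m g)
    (hoff : ∀ i j, i < q - k → i < j → j < q → f.coeff (i * q + j) = g.coeff (i * q + j))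
    (hdiag : ∀ i ≤ q - k, f.coeff (i * q + i) = g.coeff (i * q + i)) : f = g := by
  refine hf.ext hg fun i j hij hj => ?_
  rcases hij.eq_or_lt with rfl | hlt
  · rcases le_or_gt i (q - k) with hi | hi
    · exact hdiag i hi
    · rw [hfc i i hi.le hj hi.le hj, hgc i i hi.le hj hi.le hj, if_neg (by omega),
        if_neg (by omega)]
  · rcases lt_or_ge i (q - k) with hi | hi
    · exact hoff i j hi hlt hj
    · rw [hfc i j hi (by omega) (by omega) hj, hgc i j hi (by omega) (by omega) hj,
        if_neg (by omega), if_neg (by omega)]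

theorem memU_iff_hasCornerBlock (hk0 : 0 < k) (hk : k ≤ q) (hφ : ∀ x, φ x = x ^ q)
    (hφφ : Function.Involutive φ) {h : F[X]} :
    memU q k h ↔ IsHermitianPoly q φ h ∧
      HasCornerBlock q k (h.coeff ((q - k) * (q + 1))) h := by
  rw [memU_iff_exists_uPoly, mul_add_one]
  constructor
  · rintro ⟨c, d, hd, rfl⟩
    rw [coeff_uPoly_self hk0 hk c d le_rfl]
    exact ⟨isHermitianPoly_uPoly hk0 hk hφ hφφ c hd, hasCornerBlock_uPoly hk0 c d⟩
  · rintro ⟨hherm, hcorner⟩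
    let d (i : ℕ) : F := if i ≤ q - k then h.coeff (i * q + i) else 0
    have hd (i : ℕ) : d i ^ q = d i := by
      simp only [d, ← hφ, apply_ite φ, map_zero]
      exact if_ctx_congr Iff.rfl (fun hi => (hherm.2 i (by omega) i (by omega)).symm) fun _ => rfl
    refine ⟨fun i j => h.coeff (i * q + j), d, hd, ?_⟩
    refine eq_of_hasCornerBlock hherm (isHermitianPoly_uPoly hk0 hk hφ hφφ _ hd) hcorner
      (hasCornerBlock_uPoly hk0 _ d) (fun i j hi hij hj => ?_) fun i hi => ?_
    · rw [coeff_uPoly_of_lt hk0 _ d hi hij hj]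
    · rw [coeff_uPoly_self hk0 hk _ d hi, show d i = _ from if_pos hi]

theorem memU_one_iff (hq : 1 ≤ q) (hφ : ∀ x, φ x = x ^ q) (hφφ : Function.Involutive φ)
    {h : F[X]} : memU q 1 h ↔ IsHermitianPoly q φ h := by
  rw [memU_iff_hasCornerBlock one_pos hq hφ hφφ, and_iff_left]
  intro i j hki hi hkj hj
  obtain rfl : i = q - 1 := by omega
  obtain rfl : j = q - 1 := by omega
  rw [if_pos ⟨rfl, rfl⟩, mul_add_one]

theorem uPoly_zero (hq : 0 < q) (c : ℕ → ℕ → F) (d : ℕ → F) :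
    uPoly q 0 c d = uPoly q 1 c d + C (d q) * X ^ (q * (q + 1)) := by
  obtain ⟨r, rfl⟩ := Nat.exists_eq_succ_of_ne_zero hq.ne'
  simp [uPoly, Finset.sum_range_succ, add_assoc]

theorem memU_zero_iff (hq : 0 < q) {h : F[X]} :
    memU q 0 h ↔ ∃ (g : F[X]) (c : F), memU q 1 g ∧ c ^ q = c ∧
      h = g + C c * X ^ (q * (q + 1)) := by
  simp only [memU_iff_exists_uPoly]
  constructor
  · rintro ⟨c, d, hd, rfl⟩
    exact ⟨uPoly q 1 c d, d q, ⟨c, d, hd, rfl⟩, hd q, uPoly_zero hq c d⟩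
  · rintro ⟨_, e, ⟨c, d, hd, rfl⟩, he, rfl⟩
    refine ⟨c, Function.update d q e, fun i => ?_, ?_⟩
    · rcases eq_or_ne i q with rfl | hi
      · simpa using he
      · simpa [hi] using hd i
    · have hupdate : uPoly q 1 c (Function.update d q e) = uPoly q 1 c d := by
        unfold uPoly
        congr 1
        refine Finset.sum_congr rfl fun i hi => ?_
        rw [Function.update_of_ne (by have := Finset.mem_range.mp hi; omega)]
      rw [uPoly_zero hq, hupdate, Function.update_self]

end SpaceU

section Cardinality

variable {F : Type} [Field F] {q k : ℕ} {φ : F →+* F}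

/-- The pairs `(i, j)` with `i < q - k` and `i < j < q` that index the coefficients `h_{ij}` of
the elements of `U`. -/
def upperIndices (q k : ℕ) : Finset (Σ _ : ℕ, ℕ) :=
  (Finset.range (q - k)).sigma fun i => Finset.Ico (i + 1) q

theorem mem_upperIndices {p : Σ _ : ℕ, ℕ} :
    p ∈ upperIndices q k ↔ p.1 < q - k ∧ p.1 < p.2 ∧ p.2 < q := by
  rw [upperIndices, Finset.mem_sigma, Finset.mem_range, Finset.mem_Ico, Nat.succ_le_iff]

theorem two_mul_sum_range_sub_add_add_sq {m : ℕ} (hm : m ≤ q) :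
    2 * ∑ i ∈ Finset.range m, (q - (i + 1)) + m + (q - m) ^ 2 = q ^ 2 := by
  induction m with
  | zero => simp
  | succ m ih =>
    obtain ⟨r, rfl⟩ := Nat.exists_eq_add_of_le hm
    rw [← ih (by omega), Finset.sum_range_succ, Nat.add_sub_cancel_left,
      show m + 1 + r - m = r + 1 by omega]
    ring

theorem two_mul_card_upperIndices_add (hk : k ≤ q) :
    2 * (upperIndices q k).card + (q - k + 1) = q ^ 2 + 1 - k ^ 2 := by
  have hsum := two_mul_sum_range_sub_add_add_sq (Nat.sub_le q k)
  rw [Nat.sub_sub_self hk] at hsum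
  simp only [upperIndices, Finset.card_sigma, Nat.card_Ico]
  omega

/-- The coefficients that determine an element of `U`: those above the diagonal, `h_{ij}`, and
those on it, `h_i`. -/
def uCoeffs (q k : ℕ) (h : F[X]) : (upperIndices q k → F) × (Fin (q - k + 1) → F) :=
  (fun p => h.coeff (p.1.1 * q + p.1.2), fun i => h.coeff (i * q + i))

theorem injOn_uCoeffs (hk0 : 0 < k) (hk : k ≤ q) (hφ : ∀ x, φ x = x ^ q)
    (hφφ : Function.Involutive φ) : Set.InjOn (uCoeffs q k) {h : F[X] | memU q k h} := by
  intro f hf g hg hfg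
  obtain ⟨hfh, hfc⟩ := (memU_iff_hasCornerBlock hk0 hk hφ hφφ).mp hf
  obtain ⟨hgh, hgc⟩ := (memU_iff_hasCornerBlock hk0 hk hφ hφφ).mp hg
  refine eq_of_hasCornerBlock hfh hgh hfc hgc (fun i j hi hij hj => ?_) fun i hi => ?_
  · exact congrFun (congrArg Prod.fst hfg) ⟨⟨i, j⟩, mem_upperIndices.mpr ⟨hi, hij, hj⟩⟩
  · exact congrFun (congrArg Prod.snd hfg) ⟨i, Nat.lt_succ_of_le hi⟩

theorem image_uCoeffs (hk0 : 0 < k) (hk : k ≤ q) (hφ : ∀ x, φ x = x ^ q)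
    (hφφ : Function.Involutive φ) :
    uCoeffs q k '' {h : F[X] | memU q k h} = Set.univ ×ˢ {d | ∀ i, d i ^ q = d i} := by
  have hq : 0 < q := hk0.trans_le hk
  refine Set.Subset.antisymm ?_ ?_
  · rintro _ ⟨h, hh, rfl⟩
    refine ⟨trivial, fun i => ?_⟩
    have hi : (i : ℕ) < q := by omega
    rw [← hφ]
    exact (((memU_iff_hasCornerBlock hk0 hk hφ hφφ).mp hh).1.2 i hi i hi).symm
  · rintro ⟨c, d⟩ ⟨-, hd⟩
    let c' (i j : ℕ) : F := if hij : ⟨i, j⟩ ∈ upperIndices q k then c ⟨_, hij⟩ else 0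
    let d' (i : ℕ) : F := if hi : i < q - k + 1 then d ⟨i, hi⟩ else 0
    have hd' (i : ℕ) : d' i ^ q = d' i := by
      simp only [d']
      split_ifs
      exacts [hd _, zero_pow hq.ne']
    refine ⟨uPoly q k c' d', ⟨c', d', hd', rfl⟩, Prod.ext (funext fun p => ?_) (funext fun i => ?_)⟩
    · obtain ⟨hi, hij, hj⟩ := mem_upperIndices.mp p.2
      exact (coeff_uPoly_of_lt hk0 c' d' hi hij hj).trans (dif_pos p.2)
    · exact (coeff_uPoly_self hk0 hk c' d' (Nat.le_of_lt_succ i.2)).trans (dif_pos i.2)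

variable [Fintype F]

theorem ncard_setOf_forall_pow_eq_self (hF : Fintype.card F = q ^ 2) (n : ℕ) :
    Set.ncard {v : Fin n → F | ∀ i, v i ^ q = v i} = q ^ n := by
  rw [← Nat.card_coe_set_eq, Set.coe_ofPred,
    Nat.card_congr (Equiv.subtypePiEquivPi (p := fun (_ : Fin n) (x : F) => x ^ q = x)),
    Nat.card_fun, Nat.card_fin, card_pow_eq_self two_ne_zero (one_lt_of_card_eq_sq hF) hF]

theorem ncard_setOf_memU (hk0 : 0 < k) (hk : k ≤ q) (hF : Fintype.card F = q ^ 2)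
    (hφ : ∀ x, φ x = x ^ q) :
    Set.ncard {h : F[X] | memU q k h} = q ^ (q ^ 2 + 1 - k ^ 2) := by
  have hφφ := involutive_of_eq_pow hF hφ
  rw [← (injOn_uCoeffs hk0 hk hφ hφφ).ncard_image, image_uCoeffs hk0 hk hφ hφφ, Set.ncard_prod,
    Set.ncard_univ, Nat.card_fun, ncard_setOf_forall_pow_eq_self hF, Nat.card_eq_fintype_card,
    hF, Nat.card_eq_fintype_card, Fintype.card_coe, ← pow_mul, ← pow_add,
    two_mul_card_upperIndices_add hk]

end Cardinality

section PunctureCode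

variable {F : Type} [Field F] [Fintype F] {q k : ℕ} {a : Fin (q ^ 2) → F} {φ : F →+* F}

theorem puncRS_eq_image_of_pos (hk0 : 0 < k) (hk : k ≤ q) (hF : Fintype.card F = q ^ 2)
    (hφ : ∀ x, φ x = x ^ q) (ha : Function.Bijective a) :
    puncRS q k a = rsWord q ((q - k) * (q + 1) + 1) a '' {h | memU q k h} := by
  have hφφ := involutive_of_eq_pow hF hφ
  have hlt : q - k < q := by omega
  ext v
  constructor
  · intro hv
    obtain ⟨h, hdeg, heval⟩ := exists_degree_lt_forall_eval_eq ha.1 fun i => v i.castSucc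
    obtain ⟨⟨hherm, -⟩, hcorner⟩ :=
      (mem_puncRS_iff_hasCornerBlock hk hF hφ ha hdeg fun i => (heval i).symm).mp hv
    have hlast : h.coeff ((q - k) * (q + 1)) = v (Fin.last _) := by
      rw [mul_add_one, hcorner _ _ le_rfl hlt le_rfl hlt, if_pos ⟨rfl, rfl⟩]
    refine ⟨h, (memU_iff_hasCornerBlock hk0 hk hφ hφφ).mpr ⟨hherm, hlast ▸ hcorner⟩, ?_⟩
    funext i
    refine Fin.lastCases ?_ (fun i => ?_) i
    · rw [rsWord_last, Nat.add_sub_cancel, hlast]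
    · rw [rsWord_castSucc, heval]
  · rintro ⟨h, hh, rfl⟩
    obtain ⟨hherm, hcorner⟩ := (memU_iff_hasCornerBlock hk0 hk hφ hφφ).mp hh
    rw [mem_puncRS_iff_hasCornerBlock hk hF hφ ha hherm.1 (rsWord_castSucc h), rsWord_last,
      Nat.add_sub_cancel]
    refine ⟨⟨hherm, ?_⟩, hcorner⟩
    rw [mul_add_one, ← hφ, ← hherm.2 _ hlt _ hlt]

theorem puncRS_zero : puncRS q 0 a = {v | ∀ i, v i ^ q = v i} := by
  ext v
  refine and_iff_left fun f g hf _ => ?_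
  have hf0 : f = 0 := degree_eq_bot.mp (Nat.WithBot.lt_zero_iff.mp hf)
  simp [hf0, rsWord]

theorem memU_one_iff_eval_pow (hF : Fintype.card F = q ^ 2) (hφ : ∀ x, φ x = x ^ q) {h : F[X]} :
    memU q 1 h ↔ h.degree < (q ^ 2 : ℕ) ∧ ∀ x, h.eval x ^ q = h.eval x := by
  rw [memU_one_iff (one_lt_of_card_eq_sq hF).le hφ (involutive_of_eq_pow hF hφ)]
  exact ⟨fun hh => ⟨hh.1, (isHermitianPoly_iff_eval_pow hF hφ hh.1).mp hh⟩,
    fun hh => (isHermitianPoly_iff_eval_pow hF hφ hh.1).mpr hh.2⟩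

theorem puncRS_zero_eq_image (hF : Fintype.card F = q ^ 2) (hφ : ∀ x, φ x = x ^ q)
    (ha : Function.Bijective a) :
    puncRS q 0 a = rsWord q (q * (q + 1) + 1) a '' {h | memU q 0 h} := by
  have hq : 0 < q := zero_lt_one.trans (one_lt_of_card_eq_sq hF)
  have hnorm (x : F) : φ (x ^ (q * (q + 1))) = x ^ (q * (q + 1)) := by
    rw [hφ, pow_mul_add_one_pow hF]
  have hlast {g : F[X]} (hg : g.degree < (q ^ 2 : ℕ)) (c : F) :
      (g + C c * X ^ (q * (q + 1))).coeff (q * (q + 1)) = c :=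
    coeff_add_C_mul_X_pow_of_degree_lt (hg.trans_le (Nat.cast_le.mpr (by nlinarith))) c
  ext v
  simp only [puncRS_zero, Set.mem_ofPred_eq, Set.mem_image, memU_zero_iff hq,
    memU_one_iff_eval_pow hF hφ]
  constructor
  · intro hv
    obtain ⟨g, hdeg, heval⟩ := exists_degree_lt_forall_eval_eq ha.1 fun i =>
      v i.castSucc - v (Fin.last _) * a i ^ (q * (q + 1))
    have hg (x : F) : g.eval x ^ q = g.eval x := by
      obtain ⟨i, rfl⟩ := ha.2 x
      rw [heval, ← hφ, map_sub, map_mul, hnorm, hφ, hφ, hv, hv]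
    refine ⟨_, ⟨g, v (Fin.last _), ⟨hdeg, hg⟩, hv _, rfl⟩,
      funext fun i => Fin.lastCases ?_ (fun i => ?_) i⟩
    · rw [rsWord_last, Nat.add_sub_cancel, hlast hdeg]
    · rw [rsWord_castSucc, eval_add, eval_C_mul, eval_X_pow, heval, sub_add_cancel]
  · rintro ⟨_, ⟨g, c, ⟨hdeg, hg⟩, hcq, rfl⟩, rfl⟩ i
    refine Fin.lastCases ?_ (fun i => ?_) i
    · rw [rsWord_last, Nat.add_sub_cancel, hlast hdeg, hcq]
    · rw [rsWord_castSucc, eval_add, eval_C_mul, eval_X_pow, ← hφ, map_add, map_mul, hnorm, hφ, hφ,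
        hg, hcq]

theorem puncRS_eq_image (hk : k ≤ q) (hF : Fintype.card F = q ^ 2) (hφ : ∀ x, φ x = x ^ q)
    (ha : Function.Bijective a) :
    puncRS q k a = rsWord q ((q - k) * (q + 1) + 1) a '' {h | memU q k h} := by
  rcases k.eq_zero_or_pos with rfl | hk0
  · exact puncRS_zero_eq_image hF hφ ha
  · exact puncRS_eq_image_of_pos hk0 hk hF hφ ha

theorem ncard_puncRS (hk : k ≤ q) (hF : Fintype.card F = q ^ 2) (hφ : ∀ x, φ x = x ^ q)
    (ha : Function.Bijective a) : Set.ncard (puncRS q k a) = q ^ (q ^ 2 + 1 - k ^ 2) := by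
  rcases k.eq_zero_or_pos with rfl | hk0
  · rw [puncRS_zero, ncard_setOf_forall_pow_eq_self hF]
    rfl
  · have hdeg : {h : F[X] | memU q k h} ⊆ {h | h.degree < (q ^ 2 : ℕ)} := fun h hh =>
      ((memU_iff_hasCornerBlock hk0 hk hφ (involutive_of_eq_pow hF hφ)).mp hh).1.1
    rw [puncRS_eq_image_of_pos hk0 hk hF hφ ha, ((rsWord_injOn hF ha.2).mono hdeg).ncard_image,
      ncard_setOf_memU hk0 hk hF hφ]

end PunctureCode

/-- Let `k ≤ q` and let `C` be the `k`-dimensional Reed-Solomon code of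
length `q² + 1` over `𝔽_{q²}`.  Then
`P(C) = {(h(a_1), …, h(a_{q²}), h_{q-k}) : h ∈ U}`, where `h_{q-k}` is the coefficient of
`X^{(q-k)(q+1)}` in `h`, and the dimension of `P(C)` as an `𝔽_q`-subspace is `q² + 1 - k²`
(equivalently, `P(C)` has exactly `q^(q² + 1 - k²)` elements). -/
theorem puncture_code_of_RS_eq_evaluations_of_U
    (q k : ℕ) (hq : IsPrimePow q) (hk : k ≤ q)
    (F : Type) [Field F] [Fintype F] (hF : Fintype.card F = q ^ 2)
    (a : Fin (q ^ 2) → F) (ha : Function.Bijective a) :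
    puncRS q k a =
      {v : Fin (q ^ 2 + 1) → F | ∃ h : Polynomial F, memU q k h ∧
        v = fun i : Fin (q ^ 2 + 1) => if hi : (i : ℕ) < q ^ 2 then h.eval (a ⟨(i : ℕ), hi⟩)
                     else h.coeff ((q - k) * (q + 1))} ∧
    Set.ncard (puncRS q k a) = q ^ (q ^ 2 + 1 - k ^ 2) := by
  obtain ⟨φ, hφ⟩ := exists_ringHom_eq_pow hF hq
  refine ⟨?_, ncard_puncRS hk hF hφ ha⟩
  rw [puncRS_eq_image hk hF hφ ha]
  ext v
  exact exists_congr fun h => and_congr_right fun _ => eq_comm
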